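/- arXiv:2511.19309 — 2 statements merged into one kernel-verified Lean document; each statement's English description precedes it below -/
import Mathlib

section
/- Let 𝒫 be a generalized perimeter satisfying assumption (H), let L > 0, R > 0, E₀ ∈ 𝔠_L ∩ 𝔐_R, and let {E^0_t}_{t ≥ 0} be a flat flow with initial datum E₀ along a vanishing sequence {h_k} of time steps. Then there exists a constant λ ∈ [−R, R] such that the subgraph functions f_{E^0_t} converge uniformly on 𝕋^{d−1} to the constant λ as t → +∞. -/
open MeasureTheory Filter Set
open scoped ENNReal

noncomputable section

/-- The flat torus `𝕋^{d-1}`. -/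
abbrev Torus (d : ℕ) : Type := Fin (d-1) → AddCircle (1:ℝ)

/-- The periodic strip `𝕋^{d-1} × ℝ`. -/
abbrev Cyl (d : ℕ) : Type := Torus d × ℝ

/-- The subgraph of a function `g : 𝕋^{d-1} → ℝ`. -/
def subgraph (d : ℕ) (g : Torus d → ℝ) : Set (Cyl d) := {x | x.2 ≤ g x.1}

/-- The class `𝔠_L` of periodic `L`-Lipschitz subgraphs. -/
def LipClass (d : ℕ) (L : ℝ) : Set (Set (Cyl d)) :=
  {E | ∃ g : Torus d → ℝ, LipschitzWith (Real.toNNReal L) g ∧ E = subgraph d g}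

/-- The slab `𝕊^d_R = 𝕋^{d-1} × (-R, R)`. -/
def SlabR (d : ℕ) (R : ℝ) : Set (Cyl d) := {x | -R < x.2 ∧ x.2 < R}

/-- The class `𝔐_R` of measurable sets squeezed between two halfspaces. -/
def MR (d : ℕ) (R : ℝ) : Set (Set (Cyl d)) :=
  {E | MeasurableSet E ∧ {x : Cyl d | x.2 < -R} ⊆ E ∧ E ⊆ {x : Cyl d | x.2 < R}}

/-- The periodic halfspace `H_λ = 𝕋^{d-1} × (-∞, λ)`. -/
def halfspace (d : ℕ) (lam : ℝ) : Set (Cyl d) := {x | x.2 < lam}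

/-- Translation of `𝕋^{d-1} × ℝ` by a vector `τ ∈ ℝ^d = ℝ^{d-1} × ℝ`,
acting through the quotient. -/
def translCyl (d : ℕ) (τ : (Fin (d-1) → ℝ) × ℝ) (x : Cyl d) : Cyl d :=
  (fun i => x.1 i + (τ.1 i : AddCircle (1:ℝ)), x.2 + τ.2)

/-- A generalized perimeter: a functional `𝒫 : 𝔐 → [0,+∞]` satisfying properties
(i)-(vi) of Definition 1.2. -/
structure GenPerimeter (d : ℕ) where
  P : Set (Cyl d) → ℝ≥0∞
  /-- (i) finiteness on periodic Lipschitz subgraphs -/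
  lip_finite : ∀ L : ℝ, 0 < L → ∀ E ∈ LipClass d L, P E < ⊤
  /-- (ii) `𝒫(∅) = 0` -/
  empty_eq : P ∅ = 0
  /-- (ii) `𝒫(𝕋^{d-1} × ℝ) = 0` -/
  univ_eq : P Set.univ = 0
  /-- (iii) invariance under modifications on null sets -/
  congr_ae : ∀ E E' : Set (Cyl d), volume (symmDiff E E') = 0 → P E = P E'
  /-- (iv) lower semicontinuity w.r.t. local `L¹` convergence -/
  lsc : ∀ (En : ℕ → Set (Cyl d)) (E : Set (Cyl d)),
      (∀ R : ℝ, 0 < R →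
        Tendsto (fun n => volume (symmDiff (En n) E ∩ SlabR d R)) atTop (nhds 0)) →
      P E ≤ liminf (fun n => P (En n)) atTop
  /-- (v) submodularity -/
  submodular : ∀ E F : Set (Cyl d), P (E ∪ F) + P (E ∩ F) ≤ P E + P F
  /-- (vi) translational invariance -/
  transl_inv : ∀ (E : Set (Cyl d)) (τ : (Fin (d-1) → ℝ) × ℝ), P (translCyl d τ '' E) = P E

/-- Signed distance from a set `E`. -/
def sdist (d : ℕ) (E : Set (Cyl d)) (x : Cyl d) : ℝ :=
  Metric.infDist x E - Metric.infDist x Eᶜ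

/-- The incremental functional `𝓕̃_h(E, F) = 𝒫(F) + (1/h) ∫_{F ∩ 𝕊^d_R} sdist_E`. -/
def Ftilde (d : ℕ) (P : GenPerimeter d) (R h : ℝ) (E F : Set (Cyl d)) : EReal :=
  (P.P F : EReal) + (((1/h) * ∫ x in F ∩ SlabR d R, sdist d E x) : ℝ)

/-- `F` minimizes `𝓕̃_h(E, ·)` in `𝔐_R`. -/
def IsMinimizer (d : ℕ) (P : GenPerimeter d) (R h : ℝ) (E F : Set (Cyl d)) : Prop :=
  F ∈ MR d R ∧ ∀ F' ∈ MR d R, Ftilde d P R h E F ≤ Ftilde d P R h E F'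

/-- The discrete-in-time approximate flat solution with time step `h`, initial datum `E₀`:
`Eh k` is the set at time `k h`; each step is the (unique, Lipschitz-subgraph) minimizer of
the incremental problem. -/
def IsApproxFlow (d : ℕ) (P : GenPerimeter d) (L R h : ℝ) (E₀ : Set (Cyl d))
    (Eh : ℕ → Set (Cyl d)) : Prop :=
  Eh 0 = E₀ ∧ ∀ k : ℕ, Eh (k+1) ∈ LipClass d L ∧ IsMinimizer d P R h (Eh k) (Eh (k+1))

/-- A flat flow `E0` with initial datum `E₀` along the vanishing sequence `hk` of time steps:
`Eflow k` is the approximate flat solution with time step `hk k`, and for every `t ≥ 0` the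
approximate solutions at time `t` converge in measure to `E0 t ∈ 𝔠_L`. -/
def IsFlatFlow (d : ℕ) (P : GenPerimeter d) (L R : ℝ) (hk : ℕ → ℝ) (E₀ : Set (Cyl d))
    (Eflow : ℕ → ℕ → Set (Cyl d)) (E0 : ℝ → Set (Cyl d)) : Prop :=
  E0 0 = E₀ ∧ (∀ t : ℝ, 0 ≤ t → E0 t ∈ LipClass d L) ∧
  (∀ k, IsApproxFlow d P L R (hk k) E₀ (Eflow k)) ∧
  (∀ t : ℝ, 0 ≤ t →
    Tendsto (fun k => volume (symmDiff (Eflow k ⌊t / hk k⌋₊) (E0 t))) atTop (nhds 0))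

/-- Oscillation of a function on the torus. -/
def osc (d : ℕ) (g : Torus d → ℝ) : ℝ := (⨆ x, g x) - (⨅ x, g x)

/-- Assumption (H): a quantitative dissipation inequality for vertical shrinkings of
Lipschitz subgraphs with oscillation bounded below. -/
def AssumptionH (d : ℕ) (P : GenPerimeter d) : Prop :=
  ∀ L : ℝ, 0 < L → ∀ δ : ℝ, 0 < δ →
    ∃ ε₀ ∈ Set.Ioo (0:ℝ) 1, ∃ C : ℝ, 0 < C ∧
      ∀ g : Torus d → ℝ, LipschitzWith (Real.toNNReal L) g → δ ≤ osc d g →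
        ∀ ε : ℝ, 0 < ε → ε ≤ ε₀ →
          P.P (subgraph d (fun x => (1 - ε) * g x)) + ENNReal.ofReal (C * ε)
            ≤ P.P (subgraph d g)

/-- The subgraph function of a set. -/
def graphFn (d : ℕ) (E : Set (Cyl d)) (x : Torus d) : ℝ := sSup {y : ℝ | (x, y) ∈ E}

/-!
Comparing the minimizer `g` of one time step with any `u` lying between the old graph `f` and `g`
shows that the perimeter of `u` exceeds that of `g` by at least a multiple of `‖g - u‖₂² / h`,
because the signed distance to a Lipschitz subgraph grows linearly in the vertical direction.

By (H) and lower semicontinuity, the graphs `θ g` do not gain perimeter as `θ` decreases to `0`, so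
halfspaces minimize the perimeter among Lipschitz subgraphs; submodularity then shows that
truncating a graph at a constant level does not increase its perimeter. Taking `u` to be a
truncation of `g` yields the maximum principle: in particular the oscillation is nonincreasing.

While the oscillation is at least `δ`, the competitor `(1 - ε) g` and (H) give
`C h ≤ R ∫ |g - f|` as `ε → 0`. Taking now `u = f`, Jensen's inequality bounds the perimeter lost
in one step below by `κ h` with `κ = C² / (2 (1 + L) R²)`. The initial perimeter being finite, the
oscillation is below `δ` after time `𝒫(E₀) / κ`, uniformly in `h`; by the maximum principle all
later graphs stay within `δ` of each other, and this estimate survives the limit `h → 0`.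
-/

section

open scoped NNReal Topology

section GeneralFacts

variable {ι X Y : Type*}

theorem exists_tendstoUniformly_const_of_dist_le [SemilatticeSup ι] [Nonempty ι] [Nonempty X]
    [PseudoMetricSpace Y] [CompleteSpace Y] {F : ι → X → Y}
    (hF : ∀ ε > 0, ∃ T, ∀ s ≥ T, ∀ t ≥ T, ∀ x y, dist (F s x) (F t y) ≤ ε) :
    ∃ c, TendstoUniformly F (fun _ => c) atTop := by
  simp only [← tendsto_prod_top_iff]
  rw [← cauchy_map_iff_exists_tendsto, cauchy_map_iff']
  refine Metric.uniformity_basis_dist_le.tendsto_right_iff.2 fun ε hε => ?_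
  obtain ⟨T, hT⟩ := hF ε hε
  have htail : ∀ᶠ p : ι × X in atTop ×ˢ ⊤, T ≤ p.1 :=
    tendsto_fst.eventually (eventually_ge_atTop T)
  filter_upwards [htail.prod_mk htail] with p hp
  exact hT p.1.1 hp.1 p.2.1 hp.2 p.1.2 p.2.2

theorem sub_lt_floor_div_mul {h : ℝ} (hh : 0 < h) (T : ℝ) : T - h < ⌊T / h⌋₊ * h := by
  have hlt := (div_lt_iff₀ hh).1 (Nat.lt_floor_add_one (T / h))
  linarith

theorem lipschitzWith_const_mul [PseudoEMetricSpace X] {K : ℝ≥0} {g : X → ℝ}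
    (hg : LipschitzWith K g) {s : ℝ} (hs₀ : 0 ≤ s) (hs₁ : s ≤ 1) :
    LipschitzWith K fun x => s * g x := by
  refine ((lipschitzWith_smul s).comp hg).weaken (mul_le_of_le_one_left' ?_)
  rwa [← NNReal.coe_le_coe, coe_nnnorm, Real.norm_of_nonneg hs₀, NNReal.coe_one]

theorem lipschitzWith_snd_sub [PseudoEMetricSpace X] {K : ℝ≥0} {f : X → ℝ}
    (hf : LipschitzWith K f) : LipschitzWith (1 + K) fun p : X × ℝ => p.2 - f p.1 := by
  simpa using LipschitzWith.prod_snd.sub (hf.comp LipschitzWith.prod_fst)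

theorem eventually_inter_nonempty_of_tendsto_measure_symmDiff [TopologicalSpace X]
    [MeasurableSpace X] {μ : Measure X} [μ.IsOpenPosMeasure] {l : Filter ι} {A : ι → Set X}
    {B O : Set X} (hA : Tendsto (fun i => μ (symmDiff (A i) B)) l (𝓝 0)) (hO : IsOpen O)
    (hne : O.Nonempty) (hOB : O ⊆ B) : ∀ᶠ i in l, (O ∩ A i).Nonempty := by
  filter_upwards [hA.eventually_lt_const (hO.measure_pos μ hne)] with i hi
  by_contra hempty
  refine hi.not_ge (measure_mono fun x hx => Or.inr ⟨hOB hx, fun hxA => hempty ⟨x, hx, hxA⟩⟩)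

theorem integrable_of_continuous [TopologicalSpace X] [CompactSpace X] [MeasurableSpace X]
    [OpensMeasurableSpace X] {μ : Measure X} [IsFiniteMeasureOnCompacts μ] {f : X → ℝ}
    (hf : Continuous f) : Integrable f μ :=
  hf.integrable_of_hasCompactSupport (.of_compactSpace f)

theorem eq_zero_of_integral_sq_nonpos [TopologicalSpace X] [CompactSpace X] [MeasurableSpace X]
    [OpensMeasurableSpace X] {μ : Measure X} [IsFiniteMeasureOnCompacts μ] [μ.IsOpenPosMeasure]
    {w : X → ℝ} (hw : Continuous w) (h : ∫ x, w x ^ 2 ∂μ ≤ 0) : w = 0 := by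
  have hzero : ∫ x, w x ^ 2 ∂μ = 0 := h.antisymm (integral_nonneg fun x => sq_nonneg _)
  have hae : w ^ 2 =ᵐ[μ] 0 := (integral_eq_zero_iff_of_nonneg (fun x => sq_nonneg _)
    (integrable_of_continuous (hw.pow 2))).1 hzero
  exact pow_eq_zero_iff two_ne_zero |>.1 (((hw.pow 2).ae_eq_iff_eq μ continuous_const).1 hae)

theorem sq_integral_abs_le_integral_sq [MeasurableSpace X] {μ : Measure X} [IsProbabilityMeasure μ]
    {w : X → ℝ} (hw : Integrable w μ) (hw2 : Integrable (fun x => w x ^ 2) μ) :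
    (∫ x, |w x| ∂μ) ^ 2 ≤ ∫ x, w x ^ 2 ∂μ := by
  have jensen := (even_two.convexOn_pow (𝕜 := ℝ)).map_integral_le (μ := μ)
    (f := fun x => |w x|) (continuous_pow 2).continuousOn isClosed_univ (by simp) hw.abs
    (by simpa [Function.comp_def] using hw2)
  simpa using jensen

theorem intervalIntegral_sub_eq {s : X × ℝ → ℝ} [TopologicalSpace X] (hs : Continuous s) (x : X)
    (a b c : ℝ) :
    (∫ y in a..c, s (x, y)) - ∫ y in a..b, s (x, y) = ∫ y in b..c, s (x, y) := by
  have hsx : Continuous fun y => s (x, y) := by fun_prop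
  exact intervalIntegral.integral_interval_sub_left (hsx.intervalIntegrable _ _)
    (hsx.intervalIntegrable _ _)

theorem continuous_intervalIntegral_prodMk [TopologicalSpace X] {s : X × ℝ → ℝ}
    (hs : Continuous s) {u v : X → ℝ} (hu : Continuous u) (hv : Continuous v) :
    Continuous fun x => ∫ y in u x..v x, s (x, y) := by
  have hprim {w : X → ℝ} (hw : Continuous w) : Continuous fun x => ∫ y in (0 : ℝ)..w x, s (x, y) :=
    intervalIntegral.continuous_parametric_intervalIntegral_of_continuous
      (f := fun x y => s (x, y)) hs hw
  exact ((hprim hv).sub (hprim hu)).congr fun x => intervalIntegral_sub_eq hs x 0 (u x) (v x)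

end GeneralFacts

section Subgraphs

variable {d : ℕ} {L R : ℝ} {u v : Torus d → ℝ}

instance : IsProbabilityMeasure (volume : Measure (Torus d)) :=
  ⟨by simp [volume_pi, Measure.pi_univ]⟩

@[simp]
theorem mem_subgraph {p : Cyl d} : p ∈ subgraph d u ↔ p.2 ≤ u p.1 := Iff.rfl

theorem measurableSet_subgraph (hu : Continuous u) : MeasurableSet (subgraph d u) :=
  (isClosed_le continuous_snd (hu.comp continuous_fst)).measurableSet

theorem measurableSet_slabR : MeasurableSet (SlabR d R) :=
  measurable_snd measurableSet_Ioo

theorem graphFn_subgraph (u : Torus d → ℝ) : graphFn d (subgraph d u) = u :=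
  funext fun x => csSup_Iic (a := u x)

theorem subgraph_graphFn {E : Set (Cyl d)} (hE : E ∈ LipClass d L) :
    subgraph d (graphFn d E) = E := by
  obtain ⟨g, -, rfl⟩ := hE
  rw [graphFn_subgraph]

theorem lipschitzWith_graphFn {E : Set (Cyl d)} (hE : E ∈ LipClass d L) :
    LipschitzWith L.toNNReal (graphFn d E) := by
  obtain ⟨g, hg, rfl⟩ := hE
  rwa [graphFn_subgraph]

theorem subgraph_mem_MR_iff (hu : Continuous u) :
    subgraph d u ∈ MR d R ↔ ∀ x, u x ∈ Ico (-R) R := by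
  constructor
  · rintro ⟨-, hlower, hupper⟩ x
    exact ⟨le_of_forall_lt_imp_le_of_dense fun y hy => hlower (a := (x, y)) hy,
      hupper (a := (x, u x)) (mem_subgraph.2 le_rfl)⟩
  · exact fun h => ⟨measurableSet_subgraph hu, fun p hp => hp.le.trans (h p.1).1,
      fun p hp => lt_of_le_of_lt hp (h p.1).2⟩

theorem volume_symmDiff_subgraph_le (hu : Continuous u) (hv : Continuous v) {a : ℝ}
    (huv : ∀ x, |v x - u x| ≤ a) :
    volume (symmDiff (subgraph d v) (subgraph d u)) ≤ ENNReal.ofReal (2 * a) := by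
  have hslice (x : Torus d) :
      Prod.mk x ⁻¹' symmDiff (subgraph d v) (subgraph d u) ⊆ Metric.closedBall (u x) a := by
    have hx := abs_le.1 (huv x)
    rintro y (⟨hyv, hyu⟩ | ⟨hyu, hyv⟩) <;> rw [Metric.mem_closedBall, Real.dist_eq, abs_le]
    · have hyv : y ≤ v x := hyv
      have hyu : u x < y := not_le.1 hyu
      constructor <;> linarith
    · have hyu : y ≤ u x := hyu
      have hyv : v x < y := not_le.1 hyv
      constructor <;> linarith
  calc volume (symmDiff (subgraph d v) (subgraph d u))
      = ∫⁻ x : Torus d, volume (Prod.mk x ⁻¹' symmDiff (subgraph d v) (subgraph d u)) :=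
        Measure.prod_apply ((measurableSet_subgraph hv).symmDiff (measurableSet_subgraph hu))
    _ ≤ ∫⁻ _ : Torus d, ENNReal.ofReal (2 * a) :=
        lintegral_mono fun x => (measure_mono (hslice x)).trans_eq (Real.volume_closedBall _ _)
    _ = ENNReal.ofReal (2 * a) := by simp

theorem setIntegral_subgraph_inter_slabR {s : Cyl d → ℝ} (hs : Continuous s) (hu : Continuous u)
    (huR : ∀ x, u x ∈ Ico (-R) R) :
    ∫ p in subgraph d u ∩ SlabR d R, s p = ∫ x, ∫ y in (-R)..u x, s (x, y) := by
  have hmeas : MeasurableSet (subgraph d u ∩ SlabR d R) :=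
    (measurableSet_subgraph hu).inter measurableSet_slabR
  have hint : IntegrableOn s (subgraph d u ∩ SlabR d R) :=
    (hs.continuousOn.integrableOn_compact (isCompact_univ.prod isCompact_Icc)).mono_set
      fun p hp => ⟨mem_univ p.1, hp.2.1.le, hp.2.2.le⟩
  have hslice (x : Torus d) :
      Prod.mk x ⁻¹' (subgraph d u ∩ SlabR d R) = Ioc (-R) (u x) := by
    ext y
    exact ⟨fun hy => ⟨hy.2.1, hy.1⟩, fun hy => ⟨hy.2, hy.1, lt_of_le_of_lt hy.2 (huR x).2⟩⟩
  calc ∫ p in subgraph d u ∩ SlabR d R, s p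
      = ∫ x, ∫ y, (subgraph d u ∩ SlabR d R).indicator s (x, y) := by
        rw [← integral_indicator hmeas]
        exact integral_prod _ ((integrable_indicator_iff hmeas).2 hint)
    _ = ∫ x, ∫ y in (-R)..u x, s (x, y) := by
        refine integral_congr_ae (.of_forall fun x => ?_)
        beta_reduce
        rw [intervalIntegral.integral_of_le (huR x).1, ← hslice x,
          ← integral_indicator (hslice x ▸ measurableSet_Ioc)]
        rfl

theorem setIntegral_subgraph_sub {s : Cyl d → ℝ} (hs : Continuous s) (hu : Continuous u)
    (huR : ∀ x, u x ∈ Ico (-R) R) (hv : Continuous v) (hvR : ∀ x, v x ∈ Ico (-R) R) :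
    (∫ p in subgraph d v ∩ SlabR d R, s p) - ∫ p in subgraph d u ∩ SlabR d R, s p =
      ∫ x, ∫ y in u x..v x, s (x, y) := by
  rw [setIntegral_subgraph_inter_slabR hs hv hvR, setIntegral_subgraph_inter_slabR hs hu huR,
    ← integral_sub]
  · simp only [intervalIntegral_sub_eq hs]
  · exact integrable_of_continuous (continuous_intervalIntegral_prodMk hs continuous_const hv)
  · exact integrable_of_continuous (continuous_intervalIntegral_prodMk hs continuous_const hu)

end Subgraphs

section SignedDistance

variable {d : ℕ} {K : ℝ≥0} {f : Torus d → ℝ}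

theorem continuous_sdist (E : Set (Cyl d)) : Continuous (sdist d E) :=
  (Metric.continuous_infDist_pt E).sub (Metric.continuous_infDist_pt Eᶜ)

theorem mem_closure_compl_subgraph {x : Torus d} {y : ℝ} (hy : f x ≤ y) :
    (x, y) ∈ closure (subgraph d f)ᶜ := by
  have hmaps : MapsTo (fun z : ℝ => (x, z)) (Ioi y) (subgraph d f)ᶜ :=
    fun z hz => not_le.2 (hy.trans_lt hz)
  exact hmaps.closure (by fun_prop) (by simp)

theorem div_le_sdist_subgraph (hf : LipschitzWith K f) {x : Torus d} {y : ℝ} (hy : f x ≤ y) :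
    (y - f x) / (1 + K) ≤ sdist d (subgraph d f) (x, y) := by
  rw [sdist, Metric.infDist_zero_of_mem_closure (mem_closure_compl_subgraph hy), sub_zero,
    Metric.le_infDist ⟨(x, f x), mem_subgraph.2 le_rfl⟩]
  rintro ⟨z, w⟩ (hw : w ≤ f z)
  rw [div_le_iff₀' (by positivity)]
  calc y - f x ≤ (y - f x) - (w - f z) := by linarith
    _ ≤ (1 + K) * dist (x, y) (z, w) :=
      (le_abs_self _).trans ((lipschitzWith_snd_sub hf).dist_le_mul (x, y) (z, w))

theorem sdist_subgraph_le_div (hf : LipschitzWith K f) {x : Torus d} {y : ℝ} (hy : y ≤ f x) :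
    sdist d (subgraph d f) (x, y) ≤ (y - f x) / (1 + K) := by
  rw [sdist, Metric.infDist_zero_of_mem (mem_subgraph.2 hy), zero_sub, neg_le,
    Metric.le_infDist (closure_nonempty_iff.1 ⟨(x, f x), mem_closure_compl_subgraph le_rfl⟩)]
  rintro ⟨z, w⟩ hw
  have hw : f z < w := not_le.1 hw
  rw [← neg_div, div_le_iff₀' (by positivity)]
  calc -(y - f x) ≤ -((y - f x) - (w - f z)) := by linarith
    _ ≤ (1 + K) * dist (x, y) (z, w) :=
      (neg_le_abs _).trans ((lipschitzWith_snd_sub hf).dist_le_mul (x, y) (z, w))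

theorem abs_sdist_subgraph_le (f : Torus d → ℝ) (x : Torus d) (y : ℝ) :
    |sdist d (subgraph d f) (x, y)| ≤ |y - f x| := by
  have hdist : dist ((x, y) : Cyl d) (x, f x) = |y - f x| := by simp [Prod.dist_eq, Real.dist_eq]
  have hinside : Metric.infDist (x, y) (subgraph d f) ≤ |y - f x| :=
    hdist ▸ Metric.infDist_le_dist_of_mem (mem_subgraph.2 le_rfl)
  have houtside : Metric.infDist (x, y) (subgraph d f)ᶜ ≤ |y - f x| := by
    rw [← Metric.infDist_closure, ← hdist]
    exact Metric.infDist_le_dist_of_mem (mem_closure_compl_subgraph le_rfl)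
  exact abs_sub_le_of_nonneg_of_le Metric.infDist_nonneg hinside Metric.infDist_nonneg houtside

theorem sq_div_le_integral_sdist (hf : LipschitzWith K f) (x : Torus d) {a b : ℝ}
    (ha : a ∈ uIcc (f x) b) :
    (b - a) ^ 2 / (2 * (1 + K)) ≤ ∫ y in a..b, sdist d (subgraph d f) (x, y) := by
  have hcont : Continuous fun y => sdist d (subgraph d f) (x, y) :=
    (continuous_sdist _).comp (by fun_prop)
  have hlin : Continuous fun y : ℝ => (y - a) / (1 + K) := by fun_prop
  have hlinInt : ∫ y in a..b, (y - a) / (1 + K) = (b - a) ^ 2 / (2 * (1 + K)) := by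
    rw [intervalIntegral.integral_div, intervalIntegral.integral_comp_sub_right (fun y => y),
      integral_id]
    field_simp
    ring
  rw [← hlinInt]
  rcases mem_uIcc.1 ha with ⟨hfa, hab⟩ | ⟨hba, haf⟩
  · refine intervalIntegral.integral_mono_on hab (hlin.intervalIntegrable _ _)
      (hcont.intervalIntegrable _ _) fun y hy => ?_
    calc (y - a) / (1 + K) ≤ (y - f x) / (1 + K) := by gcongr
      _ ≤ _ := div_le_sdist_subgraph hf (hfa.trans hy.1)
  · rw [intervalIntegral.integral_symm b a, intervalIntegral.integral_symm b a, neg_le_neg_iff]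
    refine intervalIntegral.integral_mono_on hba (hcont.intervalIntegrable _ _)
      (hlin.intervalIntegrable _ _) fun y hy => ?_
    calc sdist d (subgraph d f) (x, y) ≤ (y - f x) / (1 + K) :=
          sdist_subgraph_le_div hf (hy.2.trans haf)
      _ ≤ (y - a) / (1 + K) := by gcongr

theorem abs_integral_sdist_le (f : Torus d → ℝ) (x : Torus d) (a b : ℝ) :
    |∫ y in a..b, sdist d (subgraph d f) (x, y)| ≤ (|b - f x| + |b - a|) * |b - a| := by
  rw [← Real.norm_eq_abs]
  refine intervalIntegral.norm_integral_le_of_norm_le_const fun y hy => ?_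
  calc ‖sdist d (subgraph d f) (x, y)‖ ≤ |y - f x| := abs_sdist_subgraph_le f x y
    _ ≤ |y - b| + |b - f x| := abs_sub_le y b (f x)
    _ = |b - f x| + |b - y| := by rw [add_comm, abs_sub_comm y b]
    _ ≤ |b - f x| + |b - a| :=
      add_le_add_right (abs_sub_right_of_mem_uIcc (uIoc_subset_uIcc hy)) _

end SignedDistance

section Oscillation

variable {d : ℕ} {g : Torus d → ℝ}

theorem sub_le_osc (hg : Continuous g) (x y : Torus d) : g x - g y ≤ osc d g :=
  sub_le_sub (le_ciSup (isCompact_range hg).bddAbove x) (ciInf_le (isCompact_range hg).bddBelow y)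

theorem osc_le_of_forall_sub_le {c : ℝ} (hg : ∀ x y, g x - g y ≤ c) : osc d g ≤ c := by
  have hsup (y : Torus d) : ⨆ x, g x ≤ c + g y := ciSup_le fun x => by linarith [hg x y]
  have hinf : (⨆ x, g x) - c ≤ ⨅ y, g y := le_ciInf fun y => by linarith [hsup y]
  rw [osc]
  linarith

theorem osc_const_mul {s : ℝ} (hs : 0 ≤ s) : osc d (fun x => s * g x) = s * osc d g := by
  rw [osc, osc, ← Real.mul_iSup_of_nonneg hs, ← Real.mul_iInf_of_nonneg hs, mul_sub]

end Oscillation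

section Perimeter

variable {d : ℕ} {K : ℝ≥0} {u g : Torus d → ℝ}

namespace GenPerimeter

variable (P : GenPerimeter d)

/-- The real-valued perimeter of the subgraph of `u`. It takes the junk value `0` when that
perimeter is infinite, which does not happen for Lipschitz `u`. -/
def graphPerimeter (u : Torus d → ℝ) : ℝ := (P.P (subgraph d u)).toReal

/-- The infinitesimal form of assumption (H) at fixed Lipschitz constant `K` and oscillation
threshold `δ`: replacing `g` by `(1 - ε) * g` lowers the perimeter by at least `C * ε`
for all small `ε > 0`. -/
def DissipatesUnderShrinking (K : ℝ≥0) (δ C : ℝ) : Prop :=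
  ∀ g : Torus d → ℝ, LipschitzWith K g → δ ≤ osc d g →
    ∀ᶠ ε in 𝓝[>] (0 : ℝ),
      P.graphPerimeter (fun x => (1 - ε) * g x) + C * ε ≤ P.graphPerimeter g

theorem subgraph_ne_top (hu : LipschitzWith K u) : P.P (subgraph d u) ≠ ⊤ :=
  (P.lip_finite (K + 1) (by positivity) _
    ⟨u, hu.weaken (NNReal.le_toNNReal_of_coe_le (by simp)), rfl⟩).ne

theorem graphPerimeter_nonneg (u : Torus d → ℝ) : 0 ≤ P.graphPerimeter u :=
  ENNReal.toReal_nonneg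

theorem coe_graphPerimeter (hu : LipschitzWith K u) :
    (P.graphPerimeter u : EReal) = P.P (subgraph d u) :=
  EReal.coe_ennreal_toReal (P.subgraph_ne_top hu)

theorem graphPerimeter_le_iff {K' : ℝ≥0} (hu : LipschitzWith K u) (hg : LipschitzWith K' g) :
    P.graphPerimeter u ≤ P.graphPerimeter g ↔ P.P (subgraph d u) ≤ P.P (subgraph d g) :=
  ENNReal.toReal_le_toReal (P.subgraph_ne_top hu) (P.subgraph_ne_top hg)

theorem graphPerimeter_add_const (u : Torus d → ℝ) (c : ℝ) :
    P.graphPerimeter (fun x => u x + c) = P.graphPerimeter u := by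
  have himage : translCyl d (0, c) '' subgraph d u = subgraph d fun x => u x + c := by
    ext ⟨x, y⟩
    simp only [mem_image, Prod.exists, translCyl, mem_subgraph, Pi.zero_apply,
      AddCircle.coe_zero, add_zero, Prod.mk.injEq]
    exact ⟨by rintro ⟨x, z, hz, rfl, rfl⟩; gcongr, fun hy => ⟨x, y - c, by linarith, rfl, by ring⟩⟩
  rw [graphPerimeter, ← himage, P.transl_inv, graphPerimeter]

theorem graphPerimeter_max_add_min_le {K' : ℝ≥0} (hu : LipschitzWith K u)
    (hg : LipschitzWith K' g) :
    P.graphPerimeter (fun x => max (u x) (g x)) + P.graphPerimeter (fun x => min (u x) (g x)) ≤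
      P.graphPerimeter u + P.graphPerimeter g := by
  have hunion : subgraph d u ∪ subgraph d g = subgraph d fun x => max (u x) (g x) := by
    ext p
    simp
  have hinter : subgraph d u ∩ subgraph d g = subgraph d fun x => min (u x) (g x) := by
    ext p
    simp
  have hsub := P.submodular (subgraph d u) (subgraph d g)
  rw [hunion, hinter] at hsub
  simp only [graphPerimeter]
  rw [← ENNReal.toReal_add (P.subgraph_ne_top (hu.max hg)) (P.subgraph_ne_top (hu.min hg)),
    ← ENNReal.toReal_add (P.subgraph_ne_top hu) (P.subgraph_ne_top hg)]
  exact ENNReal.toReal_mono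
    (ENNReal.add_ne_top.2 ⟨P.subgraph_ne_top hu, P.subgraph_ne_top hg⟩) hsub

theorem lowerSemicontinuous_subgraph :
    LowerSemicontinuous fun u : C(Torus d, ℝ) => P.P (subgraph d u) := by
  refine lowerSemicontinuous_iff_isClosed_preimage.2 fun c =>
    IsSeqClosed.isClosed fun u v hu huv => ?_
  have hsymm : Tendsto (fun n => volume (symmDiff (subgraph d (u n)) (subgraph d v))) atTop
      (𝓝 0) := by
    have hdist : Tendsto (fun n => ENNReal.ofReal (2 * dist (u n) v)) atTop (𝓝 0) := by
      simpa using ENNReal.tendsto_ofReal ((tendsto_iff_dist_tendsto_zero.1 huv).const_mul 2)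
    exact tendsto_of_tendsto_of_tendsto_of_le_of_le tendsto_const_nhds hdist (fun _ => zero_le)
      fun n => volume_symmDiff_subgraph_le v.continuous (u n).continuous
        (ContinuousMap.dist_apply_le_dist (f := u n) (g := v))
  calc P.P (subgraph d v) ≤ liminf (fun n => P.P (subgraph d (u n))) atTop :=
        P.lsc _ _ fun R _ => tendsto_of_tendsto_of_tendsto_of_le_of_le tendsto_const_nhds hsymm
          (fun _ => zero_le) fun n => measure_mono inter_subset_left
    _ ≤ liminf (fun _ : ℕ => c) atTop := liminf_le_liminf (.of_forall hu)
    _ = c := liminf_const c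

end GenPerimeter

namespace AssumptionH

open GenPerimeter

variable {P : GenPerimeter d}

theorem exists_dissipatesUnderShrinking (hH : AssumptionH d P) (K : ℝ≥0) {δ : ℝ}
    (hδ : 0 < δ) : ∃ C > 0, P.DissipatesUnderShrinking K δ C := by
  obtain ⟨ε₀, hε₀, C, hC, hdiss⟩ := hH (K + 1) (by positivity) δ hδ
  refine ⟨C, hC, fun g hg hosc => ?_⟩
  filter_upwards [Ioc_mem_nhdsGT hε₀.1] with ε hε
  have hshrunk : LipschitzWith K fun x => (1 - ε) * g x :=
    lipschitzWith_const_mul hg (by linarith [hε.2, hε₀.2]) (by linarith [hε.1])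
  have hle := hdiss g (hg.weaken (NNReal.le_toNNReal_of_coe_le (by simp))) hosc ε hε.1 hε.2
  calc P.graphPerimeter (fun x => (1 - ε) * g x) + C * ε
      = (P.P (subgraph d fun x => (1 - ε) * g x) + ENNReal.ofReal (C * ε)).toReal := by
        rw [ENNReal.toReal_add (P.subgraph_ne_top hshrunk) ENNReal.ofReal_ne_top,
          ENNReal.toReal_ofReal (mul_nonneg hC.le hε.1.le), graphPerimeter]
    _ ≤ P.graphPerimeter g := ENNReal.toReal_mono (P.subgraph_ne_top hg) hle

theorem exists_shrinking_le (hH : AssumptionH d P) (hg : LipschitzWith K g) (hosc : 0 < osc d g) :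
    ∃ ε ∈ Ioc (0 : ℝ) 1, P.P (subgraph d fun x => (1 - ε) * g x) ≤ P.P (subgraph d g) := by
  obtain ⟨C, hC, hdiss⟩ := hH.exists_dissipatesUnderShrinking K hosc
  obtain ⟨ε, hle, hε⟩ :=
    ((hdiss g hg le_rfl).and (Ioc_mem_nhdsGT one_pos)).exists
  have hshrunk : LipschitzWith K fun x => (1 - ε) * g x :=
    lipschitzWith_const_mul hg (by linarith [hε.2]) (by linarith [hε.1])
  refine ⟨ε, hε, (P.graphPerimeter_le_iff hshrunk hg).1 ?_⟩
  linarith [mul_pos hC hε.1]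

theorem graphPerimeter_zero_le (hH : AssumptionH d P) (hg : LipschitzWith K g)
    (hosc : 0 < osc d g) : P.graphPerimeter 0 ≤ P.graphPerimeter g := by
  let G : C(Torus d, ℝ) := ⟨g, hg.continuous⟩
  let S : Set ℝ := {θ | P.P (subgraph d fun x => (1 - θ) * g x) ≤ P.P (subgraph d g)}
  have hclosed : IsClosed S :=
    (P.lowerSemicontinuous_subgraph.isClosed_preimage (P.P (subgraph d g))).preimage
      (show Continuous fun θ : ℝ => (1 - θ) • G by fun_prop)
  have hone : 1 ∈ S := by
    refine (hclosed.inter isClosed_Icc).mem_of_ge_of_forall_exists_gt (a := 0) (by simp [S])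
      zero_le_one fun θ hθ => ?_
    have hpos : 0 < 1 - θ := sub_pos.2 hθ.2.2
    obtain ⟨ε, hε, hle⟩ := hH.exists_shrinking_le
      (lipschitzWith_const_mul hg hpos.le (by linarith [hθ.2.1]))
      (by rw [osc_const_mul hpos.le]; positivity)
    refine ⟨θ + ε * (1 - θ), le_trans (le_of_eq ?_) (hle.trans hθ.1), ?_, ?_⟩
    · congr! 3
      ring
    · linarith [mul_pos hε.1 hpos]
    · nlinarith [hε.2]
  exact (P.graphPerimeter_le_iff (LipschitzWith.const 0) hg).2 (by simpa [S] using! hone)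

theorem graphPerimeter_const_le (hH : AssumptionH d P) (hg : LipschitzWith K g) (c : ℝ) :
    P.graphPerimeter (fun _ => c) ≤ P.graphPerimeter g := by
  have hconst (a : ℝ) : P.graphPerimeter (fun _ => a) = P.graphPerimeter 0 := by
    simpa using P.graphPerimeter_add_const 0 a
  rw [hconst]
  rcases lt_or_ge 0 (osc d g) with hosc | hosc
  · exact hH.graphPerimeter_zero_le hg hosc
  · have hg_const : g = fun _ => g 0 := funext fun x => by
      linarith [sub_le_osc hg.continuous x 0, sub_le_osc hg.continuous 0 x]
    rw [hg_const, hconst]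

theorem graphPerimeter_min_const_le (hH : AssumptionH d P) (hg : LipschitzWith K g) (c : ℝ) :
    P.graphPerimeter (fun x => min (g x) c) ≤ P.graphPerimeter g := by
  have hmax := hH.graphPerimeter_const_le (hg.max_const c) c
  linarith [P.graphPerimeter_max_add_min_le hg (LipschitzWith.const c)]

theorem graphPerimeter_max_const_le (hH : AssumptionH d P) (hg : LipschitzWith K g) (c : ℝ) :
    P.graphPerimeter (fun x => max (g x) c) ≤ P.graphPerimeter g := by
  have hmin := hH.graphPerimeter_const_le (hg.min_const c) c
  linarith [P.graphPerimeter_max_add_min_le hg (LipschitzWith.const c)]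

end AssumptionH

end Perimeter

/-- One step of the minimizing movement with time step `h`, in terms of subgraph functions:
`g` is obtained from `f` by minimizing in `𝔐_R`, both functions being `K`-Lipschitz. -/
structure IsGraphStep {d : ℕ} (P : GenPerimeter d) (K : ℝ≥0) (R h : ℝ) (f g : Torus d → ℝ) :
    Prop where
  lipschitzWith_left : LipschitzWith K f
  lipschitzWith_right : LipschitzWith K g
  left_mem_MR : subgraph d f ∈ MR d R
  isMinimizer : IsMinimizer d P R h (subgraph d f) (subgraph d g)

namespace IsGraphStep

variable {d : ℕ} {P : GenPerimeter d} {K : ℝ≥0} {R h : ℝ} {f g u : Torus d → ℝ}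

theorem left_mem_Ico (hstep : IsGraphStep P K R h f g) (x : Torus d) : f x ∈ Ico (-R) R :=
  (subgraph_mem_MR_iff hstep.lipschitzWith_left.continuous).1 hstep.left_mem_MR x

theorem right_mem_Ico (hstep : IsGraphStep P K R h f g) (x : Torus d) : g x ∈ Ico (-R) R :=
  (subgraph_mem_MR_iff hstep.lipschitzWith_right.continuous).1 hstep.isMinimizer.1 x

theorem graphPerimeter_add_integral_sdist_le (hstep : IsGraphStep P K R h f g) {K' : ℝ≥0}
    (hu : LipschitzWith K' u) (huR : ∀ x, u x ∈ Ico (-R) R) :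
    P.graphPerimeter g + 1 / h * ∫ x, ∫ y in u x..g x, sdist d (subgraph d f) (x, y) ≤
      P.graphPerimeter u := by
  have hg := hstep.lipschitzWith_right
  have hmin := hstep.isMinimizer.2 _ ((subgraph_mem_MR_iff hu.continuous).2 huR)
  rw [Ftilde, Ftilde, ← P.coe_graphPerimeter hg, ← P.coe_graphPerimeter hu] at hmin
  norm_cast at hmin
  rw [← setIntegral_subgraph_sub (continuous_sdist _) hu.continuous huR hg.continuous
    hstep.right_mem_Ico, mul_sub]
  linarith

theorem graphPerimeter_add_integral_sq_le (hstep : IsGraphStep P K R h f g) (hh : 0 < h)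
    {K' : ℝ≥0} (hu : LipschitzWith K' u) (hfug : ∀ x, u x ∈ uIcc (f x) (g x)) :
    P.graphPerimeter g + 1 / h * ((∫ x, (g x - u x) ^ 2) / (2 * (1 + K))) ≤
      P.graphPerimeter u := by
  have hf := hstep.lipschitzWith_left
  have hg := hstep.lipschitzWith_right
  have huR (x : Torus d) : u x ∈ Ico (-R) R :=
    ordConnected_Ico.uIcc_subset (hstep.left_mem_Ico x) (hstep.right_mem_Ico x) (hfug x)
  refine le_trans ?_ (hstep.graphPerimeter_add_integral_sdist_le hu huR)
  gcongr
  rw [← integral_div]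
  refine integral_mono ?_ ?_ fun x => sq_div_le_integral_sdist hf x (hfug x)
  · exact integrable_of_continuous
      (((hg.continuous.sub hu.continuous).pow 2).div_const _)
  · exact integrable_of_continuous
      (continuous_intervalIntegral_prodMk (continuous_sdist _) hu.continuous hg.continuous)

theorem eq_of_graphPerimeter_le (hstep : IsGraphStep P K R h f g) (hh : 0 < h) {K' : ℝ≥0}
    (hu : LipschitzWith K' u) (hfug : ∀ x, u x ∈ uIcc (f x) (g x))
    (hP : P.graphPerimeter u ≤ P.graphPerimeter g) : g = u := by
  have hgain := hstep.graphPerimeter_add_integral_sq_le hh hu hfug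
  have hsq : ∫ x, (g x - u x) ^ 2 ≤ 0 := by
    by_contra! hpos
    have : 0 < 1 / h * ((∫ x, (g x - u x) ^ 2) / (2 * (1 + K))) := by positivity
    linarith
  exact sub_eq_zero.1 (eq_zero_of_integral_sq_nonpos
    (hstep.lipschitzWith_right.continuous.sub hu.continuous) hsq)

theorem le_right (hstep : IsGraphStep P K R h f g) (hH : AssumptionH d P) (hh : 0 < h) {m : ℝ}
    (hm : ∀ x, m ≤ f x) (x : Torus d) : m ≤ g x := by
  have hg := hstep.lipschitzWith_right
  have htrunc : g = fun x => max (g x) m := by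
    refine hstep.eq_of_graphPerimeter_le hh (hg.max_const m) (fun x => ?_)
      (hH.graphPerimeter_max_const_le hg m)
    rcases le_total (g x) m with hgm | hmg
    · exact mem_uIcc.2 (.inr ⟨le_max_left _ _, max_le (hgm.trans (hm x)) (hm x)⟩)
    · simp [max_eq_left hmg]
  exact htrunc ▸ le_max_right (g x) m

theorem right_le (hstep : IsGraphStep P K R h f g) (hH : AssumptionH d P) (hh : 0 < h) {M : ℝ}
    (hM : ∀ x, f x ≤ M) (x : Torus d) : g x ≤ M := by
  have hg := hstep.lipschitzWith_right
  have htrunc : g = fun x => min (g x) M := by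
    refine hstep.eq_of_graphPerimeter_le hh (hg.min_const M) (fun x => ?_)
      (hH.graphPerimeter_min_const_le hg M)
    rcases le_total (g x) M with hgM | hMg
    · simp [min_eq_left hgM]
    · exact mem_uIcc.2 (.inl ⟨le_min ((hM x).trans hMg) (hM x), min_le_left _ _⟩)
  exact htrunc ▸ min_le_right (g x) M

theorem neg_integral_sdist_shrinking_le (hstep : IsGraphStep P K R h f g) {ε : ℝ} (hε : 0 ≤ ε) :
    -∫ x, ∫ y in (1 - ε) * g x..g x, sdist d (subgraph d f) (x, y) ≤
      ε * (R * ((∫ x, |g x - f x|) + ε * R)) := by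
  have hf := hstep.lipschitzWith_left.continuous
  have hg := hstep.lipschitzWith_right.continuous
  have hpointwise (x : Torus d) : -∫ y in (1 - ε) * g x..g x, sdist d (subgraph d f) (x, y) ≤
      (|g x - f x| + ε * R) * (ε * R) := by
    have hgR : |g x| ≤ R := abs_le.2 ⟨(hstep.right_mem_Ico x).1, (hstep.right_mem_Ico x).2.le⟩
    have hlen : |g x - (1 - ε) * g x| ≤ ε * R := by
      rw [show g x - (1 - ε) * g x = ε * g x by ring, abs_mul, abs_of_nonneg hε]
      gcongr
    have hεR : 0 ≤ ε * R := (abs_nonneg _).trans hlen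
    refine (neg_le_abs _).trans ((abs_integral_sdist_le f x _ _).trans ?_)
    gcongr
  have hdiff : Continuous fun x => |g x - f x| := (hg.sub hf).abs
  calc -∫ x, ∫ y in (1 - ε) * g x..g x, sdist d (subgraph d f) (x, y)
      = ∫ x, -∫ y in (1 - ε) * g x..g x, sdist d (subgraph d f) (x, y) := integral_neg _ |>.symm
    _ ≤ ∫ x, (|g x - f x| + ε * R) * (ε * R) :=
        integral_mono (integrable_of_continuous (continuous_intervalIntegral_prodMk
          (continuous_sdist _) (hg.const_mul _) hg)).neg
          (integrable_of_continuous ((hdiff.add_const _).mul_const _)) hpointwise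
    _ = ε * (R * ((∫ x, |g x - f x|) + ε * R)) := by
        rw [integral_mul_const, integral_add (integrable_of_continuous hdiff)
          (integrable_const _), integral_const, probReal_univ, one_smul]
        ring

theorem mul_le_integral_abs_sub (hstep : IsGraphStep P K R h f g) (hh : 0 < h) {δ C : ℝ}
    (hdiss : P.DissipatesUnderShrinking K δ C) (hosc : δ ≤ osc d g) :
    C * h ≤ R * ∫ x, |g x - f x| := by
  have hg := hstep.lipschitzWith_right
  have hlim : Tendsto (fun ε : ℝ => R * ((∫ x, |g x - f x|) + ε * R)) (𝓝[>] 0)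
      (𝓝 (R * ∫ x, |g x - f x|)) := by
    refine tendsto_nhdsWithin_of_tendsto_nhds (Continuous.tendsto' (by fun_prop) _ _ ?_)
    rw [zero_mul, add_zero]
  refine ge_of_tendsto hlim ?_
  filter_upwards [hdiss g hg hosc, Ioc_mem_nhdsGT one_pos] with ε hgain hε
  have hshrunkR (x : Torus d) : (1 - ε) * g x ∈ Ico (-R) R := by
    have hx := hstep.right_mem_Ico x
    constructor <;> nlinarith [hε.1, hε.2, hx.1, hx.2]
  have hcompare := hstep.graphPerimeter_add_integral_sdist_le
    (lipschitzWith_const_mul hg (sub_nonneg.2 hε.2) (by linarith [hε.1])) hshrunkR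
  refine le_of_mul_le_mul_left ?_ hε.1
  calc ε * (C * h) = C * ε * h := by ring
    _ ≤ -∫ x, ∫ y in (1 - ε) * g x..g x, sdist d (subgraph d f) (x, y) := by
        rw [← le_div_iff₀ hh, div_eq_mul_one_div, mul_comm _ (1 / h), mul_neg]
        linarith
    _ ≤ ε * (R * ((∫ x, |g x - f x|) + ε * R)) := hstep.neg_integral_sdist_shrinking_le hε.1.le

theorem graphPerimeter_add_le (hstep : IsGraphStep P K R h f g) (hR : 0 < R) (hh : 0 < h)
    {δ C : ℝ} (hC : 0 ≤ C) (hdiss : P.DissipatesUnderShrinking K δ C) (hosc : δ ≤ osc d g) :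
    P.graphPerimeter g + C ^ 2 / (2 * (1 + K) * R ^ 2) * h ≤ P.graphPerimeter f := by
  have hf := hstep.lipschitzWith_left
  have hdiff : Continuous (g - f) := hstep.lipschitzWith_right.continuous.sub hf.continuous
  have hspeed : C * h / R ≤ ∫ x, |g x - f x| :=
    (div_le_iff₀' hR).2 (hstep.mul_le_integral_abs_sub hh hdiss hosc)
  calc P.graphPerimeter g + C ^ 2 / (2 * (1 + K) * R ^ 2) * h
      = P.graphPerimeter g + 1 / h * ((C * h / R) ^ 2 / (2 * (1 + K))) := by field_simp
    _ ≤ P.graphPerimeter g + 1 / h * ((∫ x, |g x - f x|) ^ 2 / (2 * (1 + K))) := by gcongr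
    _ ≤ P.graphPerimeter g + 1 / h * ((∫ x, (g x - f x) ^ 2) / (2 * (1 + K))) := by
        gcongr
        exact sq_integral_abs_le_integral_sq (integrable_of_continuous hdiff)
          (integrable_of_continuous (hdiff.pow 2))
    _ ≤ P.graphPerimeter f :=
        hstep.graphPerimeter_add_integral_sq_le hh hf fun _ => left_mem_uIcc

end IsGraphStep

/-- The minimizing movement with time step `h` in terms of subgraph functions: `f n` describes
the set at time `n * h`. -/
def IsGraphFlow {d : ℕ} (P : GenPerimeter d) (K : ℝ≥0) (R h : ℝ) (f : ℕ → Torus d → ℝ) : Prop :=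
  ∀ n, IsGraphStep P K R h (f n) (f (n + 1))

namespace IsGraphFlow

variable {d : ℕ} {P : GenPerimeter d} {K : ℝ≥0} {R h δ C : ℝ} {f : ℕ → Torus d → ℝ} {N m n : ℕ}

theorem continuous (hf : IsGraphFlow P K R h f) (n : ℕ) : Continuous (f n) :=
  (hf n).lipschitzWith_left.continuous

theorem const_le_of_le (hf : IsGraphFlow P K R h f) (hH : AssumptionH d P) (hh : 0 < h)
    (hNn : N ≤ n) {b : ℝ} (hb : ∀ x, b ≤ f N x) : ∀ x, b ≤ f n x := by
  induction n, hNn using Nat.le_induction with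
  | base => exact hb
  | succ n _ ih => exact (hf n).le_right hH hh ih

theorem le_const_of_le (hf : IsGraphFlow P K R h f) (hH : AssumptionH d P) (hh : 0 < h)
    (hNn : N ≤ n) {b : ℝ} (hb : ∀ x, f N x ≤ b) : ∀ x, f n x ≤ b := by
  induction n, hNn using Nat.le_induction with
  | base => exact hb
  | succ n _ ih => exact (hf n).right_le hH hh ih

theorem sub_le_osc (hf : IsGraphFlow P K R h f) (hH : AssumptionH d P) (hh : 0 < h)
    (hNm : N ≤ m) (hNn : N ≤ n) (x y : Torus d) : f m x - f n y ≤ osc d (f N) := by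
  have hbdd := isCompact_range (hf.continuous N)
  exact sub_le_sub (hf.le_const_of_le hH hh hNm (le_ciSup hbdd.bddAbove) x)
    (hf.const_le_of_le hH hh hNn (ciInf_le hbdd.bddBelow) y)

theorem osc_anti (hf : IsGraphFlow P K R h f) (hH : AssumptionH d P) (hh : 0 < h)
    (hNn : N ≤ n) : osc d (f n) ≤ osc d (f N) :=
  osc_le_of_forall_sub_le (hf.sub_le_osc hH hh hNn hNn)

theorem mul_add_graphPerimeter_le (hf : IsGraphFlow P K R h f) (hH : AssumptionH d P)
    (hR : 0 < R) (hh : 0 < h) (hC : 0 ≤ C) (hdiss : P.DissipatesUnderShrinking K δ C)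
    (hosc : δ ≤ osc d (f N)) :
    N * (C ^ 2 / (2 * (1 + K) * R ^ 2) * h) + P.graphPerimeter (f N) ≤ P.graphPerimeter (f 0) := by
  induction N with
  | zero => simp
  | succ N ih =>
    have hloss := (hf N).graphPerimeter_add_le hR hh hC hdiss hosc
    have hprev := ih (hosc.trans (hf.osc_anti hH hh N.le_succ))
    push_cast
    linarith

theorem sub_le_of_graphPerimeter_lt (hf : IsGraphFlow P K R h f) (hH : AssumptionH d P)
    (hR : 0 < R) (hh : 0 < h) (hC : 0 ≤ C) (hdiss : P.DissipatesUnderShrinking K δ C)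
    (hN : P.graphPerimeter (f 0) < N * (C ^ 2 / (2 * (1 + K) * R ^ 2) * h))
    (hNm : N ≤ m) (hNn : N ≤ n) (x y : Torus d) : f m x - f n y ≤ δ := by
  have hosc : osc d (f N) < δ := by
    by_contra! hosc
    linarith [hf.mul_add_graphPerimeter_le hH hR hh hC hdiss hosc, P.graphPerimeter_nonneg (f N)]
  exact (hf.sub_le_osc hH hh hNm hNn x y).trans hosc.le

end IsGraphFlow

namespace IsApproxFlow

variable {d : ℕ} {P : GenPerimeter d} {L R h : ℝ} {E₀ : Set (Cyl d)} {Eh : ℕ → Set (Cyl d)}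

theorem mem_lipClass_inter_MR (hE : IsApproxFlow d P L R h E₀ Eh)
    (hE₀ : E₀ ∈ LipClass d L ∩ MR d R) : ∀ n, Eh n ∈ LipClass d L ∩ MR d R
  | 0 => hE.1.symm ▸ hE₀
  | n + 1 => ⟨(hE.2 n).1, (hE.2 n).2.1⟩

theorem isGraphFlow (hE : IsApproxFlow d P L R h E₀ Eh) (hE₀ : E₀ ∈ LipClass d L ∩ MR d R) :
    IsGraphFlow P L.toNNReal R h fun n => graphFn d (Eh n) := by
  have hmem := hE.mem_lipClass_inter_MR hE₀
  intro n
  constructor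
  · exact lipschitzWith_graphFn (hmem n).1
  · exact lipschitzWith_graphFn (hmem (n + 1)).1
  · exact (subgraph_graphFn (hmem n).1).symm ▸ (hmem n).2
  · rw [subgraph_graphFn (hmem n).1, subgraph_graphFn (hmem (n + 1)).1]
    exact (hE.2 n).2

end IsApproxFlow

section ConvergenceInMeasure

variable {ι : Type*} {l : Filter ι} {d : ℕ} {u v : Torus d → ℝ} {us vs : ι → Torus d → ℝ}

theorem eventually_exists_gt_of_tendsto_symmDiff (hu : Continuous u)
    (hlim : Tendsto (fun i => volume (symmDiff (subgraph d (us i)) (subgraph d u))) l (𝓝 0))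
    {x : Torus d} {a : ℝ} (ha : a < u x) : ∀ᶠ i in l, ∃ z, a < us i z := by
  have hopen : IsOpen {p : Cyl d | a < p.2 ∧ p.2 < u p.1} :=
    (isOpen_lt continuous_const continuous_snd).inter
      (isOpen_lt continuous_snd (hu.comp continuous_fst))
  obtain ⟨b, hb⟩ := exists_between ha
  filter_upwards [eventually_inter_nonempty_of_tendsto_measure_symmDiff hlim hopen ⟨(x, b), hb⟩
    fun p hp => hp.2.le] with i ⟨p, hp, hpi⟩
  exact ⟨p.1, hp.1.trans_le hpi⟩

theorem eventually_exists_lt_of_tendsto_symmDiff (hu : Continuous u)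
    (hlim : Tendsto (fun i => volume (symmDiff (subgraph d (us i)) (subgraph d u))) l (𝓝 0))
    {x : Torus d} {a : ℝ} (ha : u x < a) : ∀ᶠ i in l, ∃ z, us i z < a := by
  have hopen : IsOpen {p : Cyl d | u p.1 < p.2 ∧ p.2 < a} :=
    (isOpen_lt (hu.comp continuous_fst) continuous_snd).inter
      (isOpen_lt continuous_snd continuous_const)
  have hcompl :
      Tendsto (fun i => volume (symmDiff (subgraph d (us i))ᶜ (subgraph d u)ᶜ)) l (𝓝 0) := by
    simpa only [compl_symmDiff_compl] using hlim
  obtain ⟨b, hb⟩ := exists_between ha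
  filter_upwards [eventually_inter_nonempty_of_tendsto_measure_symmDiff hcompl hopen ⟨(x, b), hb⟩
    fun p hp => not_le.2 hp.1] with i ⟨p, hp, hpi⟩
  have hup : us i p.1 < p.2 := not_le.1 hpi
  exact ⟨p.1, hup.trans hp.2⟩

theorem sub_le_of_tendsto_symmDiff [l.NeBot] (hu : Continuous u) (hv : Continuous v)
    (hu_lim : Tendsto (fun i => volume (symmDiff (subgraph d (us i)) (subgraph d u))) l (𝓝 0))
    (hv_lim : Tendsto (fun i => volume (symmDiff (subgraph d (vs i)) (subgraph d v))) l (𝓝 0))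
    {δ : ℝ} (hle : ∀ᶠ i in l, ∀ z w, us i z - vs i w ≤ δ) (x y : Torus d) : u x - v y ≤ δ := by
  by_contra! hlt
  obtain ⟨a, hva, hau⟩ : ∃ a, v y < a - δ ∧ a < u x :=
    (exists_between (show v y + δ < u x by linarith)).imp fun a ha => ⟨by linarith [ha.1], ha.2⟩
  obtain ⟨i, ⟨z, hz⟩, ⟨w, hw⟩, hi⟩ := ((eventually_exists_gt_of_tendsto_symmDiff hu hu_lim hau).and
    ((eventually_exists_lt_of_tendsto_symmDiff hv hv_lim hva).and hle)).exists
  linarith [hi z w]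

end ConvergenceInMeasure

namespace IsFlatFlow

variable {d : ℕ} {P : GenPerimeter d} {L R : ℝ} {hk : ℕ → ℝ} {E₀ : Set (Cyl d)}
  {Eflow : ℕ → ℕ → Set (Cyl d)} {E0 : ℝ → Set (Cyl d)} {t : ℝ}

theorem continuous_graphFn (hFF : IsFlatFlow d P L R hk E₀ Eflow E0) (ht : 0 ≤ t) :
    Continuous (graphFn d (E0 t)) :=
  (lipschitzWith_graphFn (hFF.2.1 t ht)).continuous

theorem isGraphFlow (hFF : IsFlatFlow d P L R hk E₀ Eflow E0) (hE₀ : E₀ ∈ LipClass d L ∩ MR d R)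
    (k : ℕ) : IsGraphFlow P L.toNNReal R (hk k) fun n => graphFn d (Eflow k n) :=
  (hFF.2.2.1 k).isGraphFlow hE₀

theorem tendsto_symmDiff_graphFn (hFF : IsFlatFlow d P L R hk E₀ Eflow E0)
    (hE₀ : E₀ ∈ LipClass d L ∩ MR d R) (ht : 0 ≤ t) :
    Tendsto (fun k => volume (symmDiff (subgraph d (graphFn d (Eflow k ⌊t / hk k⌋₊)))
      (subgraph d (graphFn d (E0 t))))) atTop (𝓝 0) := by
  have hmem (k n : ℕ) : Eflow k n ∈ LipClass d L :=
    ((hFF.2.2.1 k).mem_lipClass_inter_MR hE₀ n).1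
  simpa only [subgraph_graphFn (hmem _ _), subgraph_graphFn (hFF.2.1 t ht)] using hFF.2.2.2 t ht

theorem graphFn_mem_Icc (hFF : IsFlatFlow d P L R hk E₀ Eflow E0)
    (hE₀ : E₀ ∈ LipClass d L ∩ MR d R) (ht : 0 ≤ t) (x : Torus d) :
    graphFn d (E0 t) x ∈ Icc (-R) R := by
  have hcont := hFF.continuous_graphFn ht
  have hlim := hFF.tendsto_symmDiff_graphFn hE₀ ht
  have hrange (k n : ℕ) (z : Torus d) : graphFn d (Eflow k n) z ∈ Ico (-R) R :=
    (hFF.isGraphFlow hE₀ k n).left_mem_Ico z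
  have hconst (c : ℝ) : Tendsto (fun _ : ℕ => volume (symmDiff (subgraph d fun _ => c)
      (subgraph d fun _ => c))) atTop (𝓝 0) := by simp
  have hlower := sub_le_of_tendsto_symmDiff continuous_const hcont (hconst (-R)) hlim (δ := 0)
    (.of_forall fun k _ z => sub_nonpos.2 (hrange k _ z).1) x x
  have hupper := sub_le_of_tendsto_symmDiff hcont continuous_const hlim (hconst R) (δ := 0)
    (.of_forall fun k z _ => sub_nonpos.2 (hrange k _ z).2.le) x x
  exact ⟨sub_nonpos.1 hlower, sub_nonpos.1 hupper⟩

theorem exists_forall_sub_le (hFF : IsFlatFlow d P L R hk E₀ Eflow E0) (hH : AssumptionH d P)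
    (hR : 0 < R) (hE₀ : E₀ ∈ LipClass d L ∩ MR d R) (hkpos : ∀ k, 0 < hk k)
    (hkto : Tendsto hk atTop (𝓝 0)) {δ : ℝ} (hδ : 0 < δ) :
    ∃ T, ∀ s ≥ T, ∀ t ≥ T, ∀ x y, graphFn d (E0 s) x - graphFn d (E0 t) y ≤ δ := by
  obtain ⟨C, hC, hdiss⟩ := hH.exists_dissipatesUnderShrinking L.toNNReal hδ
  let κ : ℝ := C ^ 2 / (2 * (1 + L.toNNReal) * R ^ 2)
  let T : ℝ := P.graphPerimeter (graphFn d E₀) / κ + 1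
  have hκ : 0 < κ := by positivity
  have hT : 0 ≤ T := add_nonneg (div_nonneg (P.graphPerimeter_nonneg _) hκ.le) zero_le_one
  refine ⟨T, fun s hs t ht => ?_⟩
  refine sub_le_of_tendsto_symmDiff (hFF.continuous_graphFn (hT.trans hs))
    (hFF.continuous_graphFn (hT.trans ht)) (hFF.tendsto_symmDiff_graphFn hE₀ (hT.trans hs))
    (hFF.tendsto_symmDiff_graphFn hE₀ (hT.trans ht)) ?_
  filter_upwards [hkto.eventually_lt_const one_pos] with k hk_lt
  have hfloor {r : ℝ} (hr : T ≤ r) : ⌊T / hk k⌋₊ ≤ ⌊r / hk k⌋₊ :=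
    Nat.floor_mono (div_le_div_of_nonneg_right hr (hkpos k).le)
  have hN : P.graphPerimeter (graphFn d (Eflow k 0)) < ⌊T / hk k⌋₊ * (κ * hk k) := by
    rw [(hFF.2.2.1 k).1, mul_left_comm, ← div_lt_iff₀' hκ]
    linarith [sub_lt_floor_div_mul (hkpos k) T]
  exact (hFF.isGraphFlow hE₀ k).sub_le_of_graphPerimeter_lt hH hR (hkpos k) hC.le hdiss hN
    (hfloor hs) (hfloor ht)

end IsFlatFlow

end

/-- Under assumption (H), the flat flow converges uniformly to a halfspace as `t → +∞`. -/
theorem flatFlow_converges_to_halfspace (d : ℕ) (hd : 2 ≤ d) (P : GenPerimeter d)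
    (hH : AssumptionH d P) (L R : ℝ) (hL : 0 < L) (hR : 0 < R)
    (E₀ : Set (Cyl d)) (hE₀ : E₀ ∈ LipClass d L ∩ MR d R)
    (hk : ℕ → ℝ) (hkpos : ∀ k, 0 < hk k) (hkto : Tendsto hk atTop (nhds 0))
    (Eflow : ℕ → ℕ → Set (Cyl d)) (E0 : ℝ → Set (Cyl d))
    (hFF : IsFlatFlow d P L R hk E₀ Eflow E0) :
    ∃ lam ∈ Set.Icc (-R) R,
      TendstoUniformly (fun (t : ℝ) (x : Torus d) => graphFn d (E0 t) x)
        (fun _ => lam) atTop := by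
  obtain ⟨lam, hlam⟩ :
      ∃ lam, TendstoUniformly (fun t => graphFn d (E0 t)) (fun _ => lam) atTop := by
    refine exists_tendstoUniformly_const_of_dist_le fun δ hδ => ?_
    obtain ⟨T, hT⟩ := hFF.exists_forall_sub_le hH hR hE₀ hkpos hkto hδ
    exact ⟨T, fun s hs t ht x y => abs_sub_le_iff.2 ⟨hT s hs t ht x y, hT t ht s hs y x⟩⟩
  refine ⟨lam, isClosed_Icc.mem_of_tendsto (hlam.tendsto_at 0) ?_, hlam⟩
  filter_upwards [eventually_ge_atTop 0] with t ht
  exact hFF.graphFn_mem_Icc hE₀ ht 0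
end
end

section
/- Let d ≥ 2 and 0 < α < d−1. Then for every L > 0 and every periodic L-Lipschitz subgraph E ∈ 𝔠_L, the α-Riesz perimeter is finite: 𝒫^α(E) < +∞ (in particular, the defining limit lim_{R→+∞} 𝒫^α_{−R,ρ_E}(E) exists and is finite). -/
open MeasureTheory Filter Set
open scoped ENNReal

noncomputable section

/-- The periodic norm `‖ξ‖_♯ = (|ξ_d|² + min_{z'∈ℤ^{d-1}} |ξ̃' + z'|²)^{1/2}`. -/
def pnorm (d : ℕ) (ξ : Cyl d) : ℝ := Real.sqrt (ξ.2 ^ 2 + ∑ i, ‖ξ.1 i‖ ^ 2)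

/-- The Riesz interaction `𝒥^α(E,F) = ∫_E ∫_F ‖x-y‖_♯^{-(d-α)} dy dx`. -/
def Jalpha (d : ℕ) (α : ℝ) (E F : Set (Cyl d)) : ℝ≥0∞ :=
  ∫⁻ x in E, ∫⁻ y in F, (ENNReal.ofReal (pnorm d (x - y))) ^ (-((d : ℝ) - α)) ∂volume ∂volume

/-- The slab `𝕊^d_{R₁,R₂} = 𝕋^{d-1} × (R₁, R₂)`. -/
def slab2 (d : ℕ) (R₁ R₂ : ℝ) : Set (Cyl d) := {x | R₁ < x.2 ∧ x.2 < R₂}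

/-- `𝒫^α_{R₁,R₂}(E) = 𝒥^α(𝕊,𝕊) - 𝒥^α(E∩𝕊, E∩𝕊)`. -/
def PalphaSlab (d : ℕ) (α R₁ R₂ : ℝ) (E : Set (Cyl d)) : ℝ≥0∞ :=
  Jalpha d α (slab2 d R₁ R₂) (slab2 d R₁ R₂)
    - Jalpha d α (E ∩ slab2 d R₁ R₂) (E ∩ slab2 d R₁ R₂)

/-- `ρ_E < +∞`, i.e. `E` is contained in some halfspace `𝕋^{d-1} × (-∞, ρ)`. -/
def BddTop (d : ℕ) (E : Set (Cyl d)) : Prop := ∃ ρ : ℝ, E ⊆ {x : Cyl d | x.2 < ρ}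

/-- `ρ_E = inf {ρ : E ⊆ 𝕋^{d-1} × (-∞, ρ)}`. -/
def rhoSup (d : ℕ) (E : Set (Cyl d)) : ℝ := sInf {ρ : ℝ | E ⊆ {x : Cyl d | x.2 < ρ}}

open Classical in
/-- The `α`-Riesz perimeter `𝒫^α` (the limits in `R` exist by monotonicity, so they
coincide with the `limsup`). -/
def Palpha (d : ℕ) (α : ℝ) (E : Set (Cyl d)) : ℝ≥0∞ :=
  if E = ∅ then 0
  else if BddTop d E then limsup (fun R : ℝ => PalphaSlab d α (-R) (rhoSup d E) E) atTop
  else limsup (fun R : ℝ => PalphaSlab d α (-R) R E) atTop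

/-!
The kernel `‖ξ‖_♯^{-s}` with `s = d - α ∈ (1, d)` is integrable on `𝕋^{d-1} × ℝ`. For `|ξ_d| < 1`,
splitting the exponent evenly over the `d` coordinates bounds it by a product of one-dimensional
powers of exponent `-s/d > -1`; for `|ξ_d| ≥ 1` it is at most `|ξ_d|^{-s}`. By translation
invariance `𝒥^α(A, F) ≤ C |A|` for every `F`. On a slab `S`, cancelling the finite term
`𝒥^α(E ∩ S, E ∩ S)` gives `𝒫^α_S(E) = 𝒥^α(S ∖ E, E ∩ S) + 𝒥^α(S ∖ E, S)`, which increases with `S`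
and, when `S` lies in the halfspace `H` below height `ρ_E`, is at most
`2 𝒥^α(H ∖ E, 𝕋^{d-1} × ℝ) ≤ 2 C |H ∖ E|`. For the subgraph of a bounded function, `H ∖ E` has
finite volume.
-/

lemma ennreal_rpow_neg_le_rpow_neg {a b : ℝ≥0∞} {s : ℝ} (h : a ≤ b) (hs : 0 ≤ s) :
    b ^ (-s) ≤ a ^ (-s) := by
  rw [ENNReal.rpow_neg, ENNReal.rpow_neg]
  exact ENNReal.inv_le_inv.2 (ENNReal.rpow_le_rpow h hs)

lemma enorm_rpow_eq_ofReal {E : Type*} [NormedAddCommGroup E] {x : E} (hx : x ≠ 0) (s : ℝ) :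
    ‖x‖ₑ ^ s = ENNReal.ofReal (‖x‖ ^ s) := by
  rw [← ofReal_norm, ENNReal.ofReal_rpow_of_pos (norm_pos_iff.2 hx)]

section HaarPowers

variable {E : Type*} [NormedAddCommGroup E] [NormedSpace ℝ E] [FiniteDimensional ℝ E]
  [MeasurableSpace E] [BorelSpace E] (μ : Measure E) [μ.IsAddHaarMeasure]

lemma setLIntegral_ball_enorm_rpow_neg_lt_top [Nontrivial E] {b : ℝ}
    (hb : b < Module.finrank ℝ E) (r : ℝ) :
    ∫⁻ x in Metric.ball (0 : E) r, ‖x‖ₑ ^ (-b) ∂μ < ⊤ := by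
  rcases le_or_gt r 0 with hr | hr
  · simp [Metric.ball_eq_empty.2 hr]
  have h_radial : IntegrableOn (fun y : ℝ ↦ y ^ (Module.finrank ℝ E - 1) • y ^ (-b)) (Ioo 0 r) := by
    have h_pow : IntegrableOn (fun y : ℝ ↦ y ^ ((Module.finrank ℝ E : ℝ) - 1 - b)) (Ioo 0 r) :=
      (intervalIntegral.integrableOn_Ioo_rpow_iff hr).2 (by linarith)
    refine h_pow.congr_fun (fun y hy ↦ ?_) measurableSet_Ioo
    rw [smul_eq_mul, ← Real.rpow_natCast, ← Real.rpow_add hy.1,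
      Nat.cast_pred Module.finrank_pos, ← sub_eq_add_neg]
  have h_ae : ∀ᵐ x ∂μ.restrict (Metric.ball 0 r), ‖x‖ₑ ^ (-b) = ENNReal.ofReal (‖x‖ ^ (-b)) :=
    ae_restrict_of_ae <| (Measure.ae_ne μ 0).mono fun x hx ↦ enorm_rpow_eq_ofReal hx _
  rw [lintegral_congr_ae h_ae]
  exact ((integrableOn_fun_norm_addHaar μ).2 h_radial).lintegral_lt_top

lemma setLIntegral_compl_ball_enorm_rpow_neg_lt_top {s : ℝ} (hs : Module.finrank ℝ E < s) :
    ∫⁻ x in (Metric.ball (0 : E) 1)ᶜ, ‖x‖ₑ ^ (-s) ∂μ < ⊤ := by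
  have hs0 : 0 ≤ s := (Nat.cast_nonneg _).trans hs.le
  have h_le : ∀ x ∈ (Metric.ball (0 : E) 1)ᶜ,
      ‖x‖ₑ ^ (-s) ≤ ENNReal.ofReal (2 ^ s) * ENNReal.ofReal ((1 + ‖x‖) ^ (-s)) := by
    intro x hx
    have hx1 : 1 ≤ ‖x‖ := by simpa using hx
    rw [enorm_rpow_eq_ofReal (norm_pos_iff.1 (one_pos.trans_le hx1)),
      ← ENNReal.ofReal_mul (by positivity)]
    refine ENNReal.ofReal_le_ofReal ?_
    calc ‖x‖ ^ (-s) = 2 ^ s * (2 * ‖x‖) ^ (-s) := by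
          rw [Real.mul_rpow zero_le_two (norm_nonneg x), ← mul_assoc, ← Real.rpow_add two_pos,
            add_neg_cancel, Real.rpow_zero, one_mul]
      _ ≤ 2 ^ s * (1 + ‖x‖) ^ (-s) := by
          gcongr ?_ * ?_
          exact Real.rpow_le_rpow_of_nonpos (by positivity) (by linarith) (neg_nonpos.2 hs0)
  calc ∫⁻ x in (Metric.ball (0 : E) 1)ᶜ, ‖x‖ₑ ^ (-s) ∂μ
      ≤ ∫⁻ x in (Metric.ball (0 : E) 1)ᶜ,
          ENNReal.ofReal (2 ^ s) * ENNReal.ofReal ((1 + ‖x‖) ^ (-s)) ∂μ :=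
        setLIntegral_mono' Metric.isOpen_ball.measurableSet.compl h_le
    _ ≤ ∫⁻ x, ENNReal.ofReal (2 ^ s) * ENNReal.ofReal ((1 + ‖x‖) ^ (-s)) ∂μ :=
        setLIntegral_le_lintegral _ _
    _ = ENNReal.ofReal (2 ^ s) * ∫⁻ x, ENNReal.ofReal ((1 + ‖x‖) ^ (-s)) ∂μ :=
        lintegral_const_mul' _ _ ENNReal.ofReal_ne_top
    _ < ⊤ := ENNReal.mul_lt_top ENNReal.ofReal_lt_top (finite_integral_one_add_norm hs)

end HaarPowers

lemma lintegral_addCircle_enorm_rpow_neg_lt_top (T : ℝ) [hT : Fact (0 < T)] {b : ℝ} (hb : b < 1) :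
    ∫⁻ x : AddCircle T, ‖x‖ₑ ^ (-b) < ⊤ := by
  have h_abs : ∀ t ∈ Ioc (-(T / 2)) (-(T / 2) + T), |t| ≤ T / 2 := fun t ht ↦
    abs_le.2 ⟨ht.1.le, by linarith [ht.2]⟩
  have h_enorm : ∀ t ∈ Ioc (-(T / 2)) (-(T / 2) + T), ‖(t : AddCircle T)‖ₑ = ‖t‖ₑ := by
    intro t ht
    rw [← ofReal_norm, ← ofReal_norm, Real.norm_eq_abs,
      (AddCircle.norm_coe_eq_abs_iff T hT.out.ne').2]
    rw [abs_of_pos hT.out]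
    exact h_abs t ht
  have h_subset : Ioc (-(T / 2)) (-(T / 2) + T) ⊆ Metric.ball (0 : ℝ) T := fun t ht ↦ by
    rw [mem_ball_zero_iff, Real.norm_eq_abs]
    linarith [h_abs t ht, hT.out]
  calc ∫⁻ x : AddCircle T, ‖x‖ₑ ^ (-b)
      = ∫⁻ t in Ioc (-(T / 2)) (-(T / 2) + T), ‖(t : AddCircle T)‖ₑ ^ (-b) :=
        (AddCircle.lintegral_preimage T _ _).symm
    _ = ∫⁻ t in Ioc (-(T / 2)) (-(T / 2) + T), ‖t‖ₑ ^ (-b) :=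
        setLIntegral_congr_fun measurableSet_Ioc fun t ht ↦ by simp only [h_enorm t ht]
    _ ≤ ∫⁻ t in Metric.ball (0 : ℝ) T, ‖t‖ₑ ^ (-b) := lintegral_mono_set h_subset
    _ < ⊤ := setLIntegral_ball_enorm_rpow_neg_lt_top volume (by simpa using hb) T

lemma lintegral_pi_prod_eq_prod_lintegral {ι : Type*} [Fintype ι] {X : ι → Type*}
    [∀ i, MeasurableSpace (X i)] (μ : ∀ i, Measure (X i)) [∀ i, IsProbabilityMeasure (μ i)]
    {f : ∀ i, X i → ℝ≥0∞} (hf : ∀ i, Measurable (f i)) :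
    ∫⁻ x, ∏ i, f i (x i) ∂Measure.pi μ = ∏ i, ∫⁻ x, f i x ∂μ i := by
  calc ∫⁻ x, ∏ i, f i (x i) ∂Measure.pi μ
      = ∏ i, ∫⁻ x, f i (x i) ∂Measure.pi μ :=
        ProbabilityTheory.lintegral_prod_eq_prod_lintegral_of_indepFun Finset.univ
          (fun i (x : ∀ j, X j) ↦ f i (x i))
          (ProbabilityTheory.iIndepFun_pi fun i ↦ (hf i).aemeasurable)
          fun i ↦ (hf i).comp (measurable_pi_apply i)
    _ = ∏ i, ∫⁻ x, f i x ∂μ i :=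
        Finset.prod_congr rfl fun i _ ↦ (measurePreserving_eval μ i).lintegral_comp (hf i)

lemma setLIntegral_prod_mul_eq_mul {X Y : Type*} [MeasurableSpace X] [MeasurableSpace Y]
    (μ : Measure X) (ν : Measure Y) [SFinite μ] [SFinite ν] {f : X → ℝ≥0∞} {g : Y → ℝ≥0∞}
    (hf : Measurable f) (hg : Measurable g) (A : Set X) (B : Set Y) :
    ∫⁻ z in A ×ˢ B, f z.1 * g z.2 ∂μ.prod ν = (∫⁻ x in A, f x ∂μ) * ∫⁻ y in B, g y ∂ν := by
  rw [← Measure.prod_restrict, lintegral_prod_mul hf.aemeasurable hg.aemeasurable]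

section RieszKernel

variable {d : ℕ} {s : ℝ}

/-- The Riesz kernel `ξ ↦ ‖ξ‖_♯^{-s}` on `𝕋^{d-1} × ℝ`, with value `∞` at `ξ = 0` for `s > 0`;
`Jalpha d α` integrates it with `s = d - α`. -/
def rieszKernel (d : ℕ) (s : ℝ) (ξ : Cyl d) : ℝ≥0∞ := ENNReal.ofReal (pnorm d ξ) ^ (-s)

lemma measurable_rieszKernel : Measurable (rieszKernel d s) := by
  unfold rieszKernel pnorm
  fun_prop

lemma rieszKernel_neg (ξ : Cyl d) : rieszKernel d s (-ξ) = rieszKernel d s ξ := by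
  simp [rieszKernel, pnorm]

lemma rieszKernel_sub_comm (x y : Cyl d) : rieszKernel d s (x - y) = rieszKernel d s (y - x) := by
  rw [← rieszKernel_neg, neg_sub]

lemma enorm_snd_le_pnorm (ξ : Cyl d) : ‖ξ.2‖ₑ ≤ ENNReal.ofReal (pnorm d ξ) := by
  rw [← ofReal_norm]
  refine ENNReal.ofReal_le_ofReal (Real.le_sqrt_of_sq_le ?_)
  rw [Real.norm_eq_abs, sq_abs]
  exact le_add_of_nonneg_right (Finset.sum_nonneg fun i _ ↦ sq_nonneg _)

lemma enorm_fst_apply_le_pnorm (ξ : Cyl d) (i : Fin (d - 1)) :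
    ‖ξ.1 i‖ₑ ≤ ENNReal.ofReal (pnorm d ξ) := by
  rw [← ofReal_norm]
  refine ENNReal.ofReal_le_ofReal (Real.le_sqrt_of_sq_le ?_)
  calc ‖ξ.1 i‖ ^ 2 ≤ ∑ j, ‖ξ.1 j‖ ^ 2 :=
        Finset.single_le_sum (f := fun j ↦ ‖ξ.1 j‖ ^ 2) (fun j _ ↦ sq_nonneg _) (Finset.mem_univ i)
    _ ≤ ξ.2 ^ 2 + ∑ j, ‖ξ.1 j‖ ^ 2 := le_add_of_nonneg_left (sq_nonneg _)

lemma rieszKernel_le_enorm_snd_rpow (hs : 0 ≤ s) (ξ : Cyl d) :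
    rieszKernel d s ξ ≤ ‖ξ.2‖ₑ ^ (-s) :=
  ennreal_rpow_neg_le_rpow_neg (enorm_snd_le_pnorm ξ) hs

lemma rieszKernel_le_prod_enorm_rpow_mul (hd : 1 ≤ d) (hs : 0 ≤ s) (ξ : Cyl d) :
    rieszKernel d s ξ ≤ (∏ i, ‖ξ.1 i‖ₑ ^ (-(s / d))) * ‖ξ.2‖ₑ ^ (-(s / d)) := by
  have hsd : 0 ≤ s / d := by positivity
  calc rieszKernel d s ξ
      = (∏ _i : Fin (d - 1), ENNReal.ofReal (pnorm d ξ) ^ (-(s / d))) *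
          ENNReal.ofReal (pnorm d ξ) ^ (-(s / d)) := by
        rw [Finset.prod_const, Finset.card_univ, Fintype.card_fin, ← pow_succ,
          Nat.sub_add_cancel hd, ← ENNReal.rpow_natCast, ← ENNReal.rpow_mul, rieszKernel,
          neg_mul, div_mul_cancel₀ s (by positivity)]
    _ ≤ (∏ i, ‖ξ.1 i‖ₑ ^ (-(s / d))) * ‖ξ.2‖ₑ ^ (-(s / d)) :=
        mul_le_mul'
          (Finset.prod_le_prod' fun i _ ↦
            ennreal_rpow_neg_le_rpow_neg (enorm_fst_apply_le_pnorm ξ i) hsd)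
          (ennreal_rpow_neg_le_rpow_neg (enorm_snd_le_pnorm ξ) hsd)

lemma setLIntegral_univ_prod_ball_rieszKernel_lt_top (hs : 0 ≤ s) (hsd : s < d) :
    ∫⁻ ξ in univ ×ˢ Metric.ball 0 1, rieszKernel d s ξ < ⊤ := by
  have hd : (0 : ℝ) < d := hs.trans_lt hsd
  have hb : s / d < 1 := (div_lt_one hd).2 hsd
  have h_prob : IsProbabilityMeasure (volume : Measure (AddCircle (1 : ℝ))) := ⟨by simp⟩
  calc ∫⁻ ξ in univ ×ˢ Metric.ball 0 1, rieszKernel d s ξ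
      ≤ ∫⁻ ξ : Cyl d in univ ×ˢ Metric.ball 0 1,
          (∏ i, ‖ξ.1 i‖ₑ ^ (-(s / d))) * ‖ξ.2‖ₑ ^ (-(s / d)) :=
        lintegral_mono (rieszKernel_le_prod_enorm_rpow_mul (Nat.cast_pos.1 hd) hs)
    _ = (∏ _i : Fin (d - 1), ∫⁻ x : AddCircle (1 : ℝ), ‖x‖ₑ ^ (-(s / d))) *
          ∫⁻ t in Metric.ball (0 : ℝ) 1, ‖t‖ₑ ^ (-(s / d)) := by
        rw [Measure.volume_eq_prod,
          setLIntegral_prod_mul_eq_mul _ _ (f := fun x : Torus d ↦ ∏ i, ‖x i‖ₑ ^ (-(s / d)))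
            (g := fun t ↦ ‖t‖ₑ ^ (-(s / d))) (by fun_prop) (by fun_prop),
          setLIntegral_univ, volume_pi,
          lintegral_pi_prod_eq_prod_lintegral (fun _ ↦ volume)
            (f := fun _ x ↦ ‖x‖ₑ ^ (-(s / d))) fun _ ↦ by fun_prop]
    _ < ⊤ := ENNReal.mul_lt_top
        (ENNReal.prod_lt_top fun _ _ ↦ lintegral_addCircle_enorm_rpow_neg_lt_top 1 hb)
        (setLIntegral_ball_enorm_rpow_neg_lt_top volume (by simpa using hb) 1)

lemma setLIntegral_univ_prod_compl_ball_rieszKernel_lt_top (hs : 1 < s) :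
    ∫⁻ ξ in univ ×ˢ (Metric.ball 0 1)ᶜ, rieszKernel d s ξ < ⊤ := by
  calc ∫⁻ ξ in univ ×ˢ (Metric.ball 0 1)ᶜ, rieszKernel d s ξ
      ≤ ∫⁻ ξ : Cyl d in univ ×ˢ (Metric.ball 0 1)ᶜ, 1 * ‖ξ.2‖ₑ ^ (-s) :=
        lintegral_mono fun ξ ↦ by
          simpa only [one_mul] using rieszKernel_le_enorm_snd_rpow (by linarith) ξ
    _ = (∫⁻ _x : Torus d in univ, 1) * ∫⁻ t in (Metric.ball (0 : ℝ) 1)ᶜ, ‖t‖ₑ ^ (-s) :=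
        setLIntegral_prod_mul_eq_mul _ _ (f := fun _ ↦ 1) (g := fun t ↦ ‖t‖ₑ ^ (-s))
          (by fun_prop) (by fun_prop) _ _
    _ < ⊤ := ENNReal.mul_lt_top (by simp)
        (setLIntegral_compl_ball_enorm_rpow_neg_lt_top volume (by simpa using hs))

lemma lintegral_rieszKernel_lt_top (hs : 1 < s) (hsd : s < d) : ∫⁻ ξ, rieszKernel d s ξ < ⊤ := by
  have h_compl : (univ ×ˢ Metric.ball 0 1 : Set (Cyl d))ᶜ = univ ×ˢ (Metric.ball 0 1)ᶜ := by
    ext ξ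
    simp
  rw [← lintegral_add_compl _ (MeasurableSet.univ.prod Metric.isOpen_ball.measurableSet), h_compl]
  exact ENNReal.add_lt_top.2 ⟨setLIntegral_univ_prod_ball_rieszKernel_lt_top (by linarith) hsd,
    setLIntegral_univ_prod_compl_ball_rieszKernel_lt_top hs⟩

end RieszKernel

section Interaction

variable {d : ℕ} {α : ℝ}

instance isAddLeftInvariant_volume_cyl : (volume : Measure (Cyl d)).IsAddLeftInvariant :=
  Measure.prod.instIsAddLeftInvariant

lemma Jalpha_eq_lintegral_rieszKernel (E F : Set (Cyl d)) :
    Jalpha d α E F = ∫⁻ x in E, ∫⁻ y in F, rieszKernel d (d - α) (x - y) := rfl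

lemma Jalpha_comm (E F : Set (Cyl d)) : Jalpha d α E F = Jalpha d α F E := by
  have h_meas : Measurable fun p : Cyl d × Cyl d ↦ rieszKernel d (d - α) (p.1 - p.2) :=
    measurable_rieszKernel.comp (measurable_fst.sub measurable_snd)
  simp_rw [Jalpha_eq_lintegral_rieszKernel]
  rw [lintegral_lintegral_swap h_meas.aemeasurable]
  simp_rw [rieszKernel_sub_comm]

lemma Jalpha_mono {E E' F F' : Set (Cyl d)} (hE : E ⊆ E') (hF : F ⊆ F') :
    Jalpha d α E F ≤ Jalpha d α E' F' :=
  (lintegral_mono_set hE).trans (lintegral_mono fun _ ↦ lintegral_mono_set hF)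

lemma Jalpha_inter_add_sdiff_left {E : Set (Cyl d)} (hE : NullMeasurableSet E) (S F : Set (Cyl d)) :
    Jalpha d α (E ∩ S) F + Jalpha d α (S \ E) F = Jalpha d α S F := by
  simp only [Jalpha]
  rw [inter_comm, ← lintegral_add_measure, Measure.restrict_inter_add_sdiff₀ S hE]

lemma Jalpha_self_eq_add {E : Set (Cyl d)} (hE : NullMeasurableSet E) (S : Set (Cyl d)) :
    Jalpha d α S S =
      Jalpha d α (E ∩ S) (E ∩ S) + (Jalpha d α (S \ E) (E ∩ S) + Jalpha d α (S \ E) S) := by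
  rw [← add_assoc, Jalpha_inter_add_sdiff_left hE, Jalpha_comm S (E ∩ S),
    Jalpha_inter_add_sdiff_left hE]

lemma Jalpha_le_lintegral_mul_volume (E F : Set (Cyl d)) :
    Jalpha d α E F ≤ (∫⁻ ξ, rieszKernel d (d - α) ξ) * volume E := by
  rw [Jalpha_eq_lintegral_rieszKernel, ← setLIntegral_const]
  refine lintegral_mono fun x ↦ ?_
  calc ∫⁻ y in F, rieszKernel d (d - α) (x - y)
      ≤ ∫⁻ y, rieszKernel d (d - α) (x - y) := setLIntegral_le_lintegral _ _
    _ = ∫⁻ y, rieszKernel d (d - α) (y - x) := by simp_rw [rieszKernel_sub_comm x]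
    _ = ∫⁻ ξ, rieszKernel d (d - α) ξ := lintegral_sub_right_eq_self _ x

lemma Jalpha_lt_top (hα : 0 < α) (hα' : α < (d : ℝ) - 1) {E : Set (Cyl d)} (hE : volume E < ⊤)
    (F : Set (Cyl d)) : Jalpha d α E F < ⊤ :=
  (Jalpha_le_lintegral_mul_volume E F).trans_lt <|
    ENNReal.mul_lt_top (lintegral_rieszKernel_lt_top (by linarith) (by linarith)) hE

end Interaction

section Perimeter

variable {d : ℕ} {α : ℝ} {E : Set (Cyl d)}

lemma slab2_subset_slab2 {a a' b b' : ℝ} (ha : a' ≤ a) (hb : b ≤ b') :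
    slab2 d a b ⊆ slab2 d a' b' :=
  fun _ hx ↦ ⟨ha.trans_lt hx.1, hx.2.trans_le hb⟩

lemma slab2_subset_halfspace (a b : ℝ) : slab2 d a b ⊆ halfspace d b := fun _ hx ↦ hx.2

lemma volume_slab2_lt_top (a b : ℝ) : volume (slab2 d a b) < ⊤ := by
  have h_prod : slab2 d a b = univ ×ˢ Ioo a b := by
    ext
    simp [slab2]
  rw [h_prod, Measure.volume_eq_prod, Measure.prod_prod]
  exact ENNReal.mul_lt_top (measure_lt_top _ _) (by simp)

lemma volume_halfspace (a : ℝ) : volume (halfspace d a) = ⊤ := by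
  have h_prod : halfspace d a = univ ×ˢ Iio a := by
    ext
    simp [halfspace]
  rw [h_prod, Measure.volume_eq_prod, Measure.prod_prod, Real.volume_Iio]
  exact ENNReal.mul_top (NeZero.ne _)

lemma PalphaSlab_eq_add (hα : 0 < α) (hα' : α < (d : ℝ) - 1) (hE : NullMeasurableSet E)
    (a b : ℝ) :
    PalphaSlab d α a b E = Jalpha d α (slab2 d a b \ E) (E ∩ slab2 d a b) +
      Jalpha d α (slab2 d a b \ E) (slab2 d a b) := by
  have h_vol : volume (E ∩ slab2 d a b) < ⊤ :=
    (measure_mono inter_subset_right).trans_lt (volume_slab2_lt_top a b)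
  rw [PalphaSlab, Jalpha_self_eq_add hE,
    ENNReal.add_sub_cancel_left (Jalpha_lt_top hα hα' h_vol _).ne]

lemma PalphaSlab_mono (hα : 0 < α) (hα' : α < (d : ℝ) - 1) (hE : NullMeasurableSet E)
    {a a' b b' : ℝ} (ha : a' ≤ a) (hb : b ≤ b') :
    PalphaSlab d α a b E ≤ PalphaSlab d α a' b' E := by
  have h_slab : slab2 d a b ⊆ slab2 d a' b' := slab2_subset_slab2 ha hb
  rw [PalphaSlab_eq_add hα hα' hE, PalphaSlab_eq_add hα hα' hE]
  exact add_le_add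
    (Jalpha_mono (sdiff_subset_sdiff_left h_slab) (inter_subset_inter_right E h_slab))
    (Jalpha_mono (sdiff_subset_sdiff_left h_slab) h_slab)

lemma PalphaSlab_le_Jalpha_univ (hα : 0 < α) (hα' : α < (d : ℝ) - 1) (hE : NullMeasurableSet E)
    (a b : ℝ) :
    PalphaSlab d α a b E ≤
      Jalpha d α (halfspace d b \ E) univ + Jalpha d α (halfspace d b \ E) univ := by
  have h_sdiff := sdiff_subset_sdiff_left (t := E) (slab2_subset_halfspace (d := d) a b)
  rw [PalphaSlab_eq_add hα hα' hE]
  exact add_le_add (Jalpha_mono h_sdiff (subset_univ _)) (Jalpha_mono h_sdiff (subset_univ _))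

lemma Palpha_eq_limsup (hne : E.Nonempty) (hbdd : BddTop d E) :
    Palpha d α E = limsup (fun R : ℝ ↦ PalphaSlab d α (-R) (rhoSup d E) E) atTop := by
  rw [Palpha, if_neg hne.ne_empty, if_pos hbdd]

theorem Palpha_finite_on_lipschitz_general (hα : 0 < α) (hα' : α < (d : ℝ) - 1)
    (hE : NullMeasurableSet E) (hbdd : BddTop d E)
    (hvol : volume (halfspace d (rhoSup d E) \ E) < ⊤) :
    Palpha d α E < ⊤ ∧
    Tendsto (fun R : ℝ ↦ PalphaSlab d α (-R) (rhoSup d E) E) atTop (nhds (Palpha d α E)) := by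
  have hne : E.Nonempty := by
    rw [nonempty_iff_ne_empty]
    rintro rfl
    rw [sdiff_empty, volume_halfspace] at hvol
    exact hvol.false
  have h_mono : Monotone fun R : ℝ ↦ PalphaSlab d α (-R) (rhoSup d E) E := fun _ _ hR ↦
    PalphaSlab_mono hα hα' hE (neg_le_neg hR) le_rfl
  have h_tendsto := tendsto_atTop_iSup h_mono
  rw [Palpha_eq_limsup hne hbdd, h_tendsto.limsup_eq]
  refine ⟨?_, h_tendsto⟩
  have h_fin : Jalpha d α (halfspace d (rhoSup d E) \ E) univ < ⊤ := Jalpha_lt_top hα hα' hvol univ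
  exact (iSup_le fun R ↦ PalphaSlab_le_Jalpha_univ hα hα' hE (-R) _).trans_lt
    (ENNReal.add_lt_top.2 ⟨h_fin, h_fin⟩)

end Perimeter

section Subgraph

variable {d : ℕ} {g : Torus d → ℝ}

lemma measurableSet_subgraph_s11 (hg : Measurable g) : MeasurableSet (subgraph d g) :=
  measurableSet_le measurable_snd (hg.comp measurable_fst)

lemma bddTop_subgraph (hg : BddAbove (range g)) : BddTop d (subgraph d g) := by
  obtain ⟨M, hM⟩ := hg
  exact ⟨M + 1, fun x hx ↦ (hx.trans (hM (mem_range_self x.1))).trans_lt (lt_add_one M)⟩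

lemma volume_halfspace_sdiff_subgraph_lt_top (hg : BddBelow (range g)) (b : ℝ) :
    volume (halfspace d b \ subgraph d g) < ⊤ := by
  obtain ⟨m, hm⟩ := hg
  have h_subset : halfspace d b \ subgraph d g ⊆ slab2 d m b := fun x hx ↦
    ⟨(hm (mem_range_self x.1)).trans_lt (not_le.1 hx.2), hx.1⟩
  exact (measure_mono h_subset).trans_lt (volume_slab2_lt_top m b)

end Subgraph

/-- The `α`-Riesz perimeter is finite on periodic Lipschitz subgraphs, and the defining
limit exists (and equals `𝒫^α(E)`). -/
theorem Palpha_finite_on_lipschitz (d : ℕ) (hd : 2 ≤ d) (α : ℝ)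
    (hα : 0 < α) (hα' : α < (d : ℝ) - 1) (L : ℝ) (hL : 0 < L)
    (E : Set (Cyl d)) (hE : E ∈ LipClass d L) :
    Palpha d α E < ⊤ ∧
    Tendsto (fun R : ℝ => PalphaSlab d α (-R) (rhoSup d E) E) atTop
      (nhds (Palpha d α E)) := by
  obtain ⟨g, hg, rfl⟩ := hE
  have h_compact := isCompact_range hg.continuous
  exact Palpha_finite_on_lipschitz_general hα hα'
    (measurableSet_subgraph_s11 hg.continuous.measurable).nullMeasurableSet
    (bddTop_subgraph h_compact.bddAbove)
    (volume_halfspace_sdiff_subgraph_lt_top h_compact.bddBelow _)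
end
end
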